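/- Let a ≥ 2 and b ≥ 0. The partition (a+b, a, 1) is a maximal element in the standard immersion poset on partitions of 2a+b+1 if and only if a ≤ (b+1)(b+2)/2. -/

import Mathlib

open Finset MvPolynomial

/-- A partition of `n`, represented as a weakly decreasing list of positive
integers summing to `n`. -/
def IsPartitionOf (n : ℕ) (l : List ℕ) : Prop :=
  l.Pairwise (· ≥ ·) ∧ (∀ x ∈ l, 0 < x) ∧ l.sum = n

/-- `T : ℕ → ℕ → ℕ` is a semistandard Young tableau of shape `l`
(rows weakly increase, columns strictly increase, entries are `0` outside
of the diagram; entries are 0-indexed, so entry value `k` stands for the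
letter `k+1`). -/
def IsSSYT (l : List ℕ) (T : ℕ → ℕ → ℕ) : Prop :=
  (∀ i j1 j2, j1 ≤ j2 → j2 < l.getD i 0 → T i j1 ≤ T i j2) ∧
  (∀ i1 i2 j, i1 < i2 → j < l.getD i2 0 → T i1 j < T i2 j) ∧
  (∀ i j, l.getD i 0 ≤ j → T i j = 0)

/-- The tableau `T` of shape `l` has content `ν`: for every `k`, the number of
cells of the diagram of `l` whose entry is `k` equals the `(k+1)`-st part of `ν`. -/
def HasContent (l : List ℕ) (T : ℕ → ℕ → ℕ) (ν : List ℕ) : Prop :=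
  ∀ k, Nat.card {c : ℕ × ℕ // c.2 < l.getD c.1 0 ∧ T c.1 c.2 = k} = ν.getD k 0

/-- The Kostka number `K_{l,ν}`: the number of semistandard Young tableaux of
shape `l` and content `ν`. -/
noncomputable def kostka (l ν : List ℕ) : ℕ :=
  Nat.card {T : ℕ → ℕ → ℕ // IsSSYT l T ∧ HasContent l T ν}

/-- `f^λ`, the number of standard Young tableaux of shape `l`. -/
noncomputable def fSYT (l : List ℕ) : ℕ := kostka l (List.replicate l.sum 1)

/-- Dominance order: all partial sums of `l` are at most those of `m`. -/
def DomLE (l m : List ℕ) : Prop := ∀ k, (l.take k).sum ≤ (m.take k).sum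

/-- The standard immersion order: dominance together with `f^λ ≤ f^μ`. -/
def StdLE (l m : List ℕ) : Prop := DomLE l m ∧ fSYT l ≤ fSYT m

/-- Strict standard immersion order. -/
def StdLT (l m : List ℕ) : Prop := StdLE l m ∧ l ≠ m

/-- `m` covers `l` in the standard immersion poset on partitions of `n`. -/
def StdCovBy (n : ℕ) (l m : List ℕ) : Prop :=
  StdLT l m ∧ ∀ ν, IsPartitionOf n ν → StdLT l ν → ¬ StdLT ν m

/-- `l` is a maximal element of the standard immersion poset on partitions of `n`. -/
def StdMaximal (n : ℕ) (l : List ℕ) : Prop :=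
  ∀ m, IsPartitionOf n m → m ≠ l → ¬ StdLE l m

/-- The immersion order on partitions of `n`: `l ≤_I m` iff
`K_{l,α} ≤ K_{m,α}` for every partition `α` of `n`. -/
def ImmersionLE (n : ℕ) (l m : List ℕ) : Prop :=
  ∀ ν, IsPartitionOf n ν → kostka l ν ≤ kostka m ν

/-- Strict immersion order. -/
def ImmersionLT (n : ℕ) (l m : List ℕ) : Prop := ImmersionLE n l m ∧ l ≠ m

/-- `m` covers `l` in the immersion poset on partitions of `n`. -/
def ImmersionCovBy (n : ℕ) (l m : List ℕ) : Prop :=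
  ImmersionLT n l m ∧ ∀ ν, IsPartitionOf n ν → ImmersionLT n l ν → ¬ ImmersionLT n ν m

/-!
For shapes with at most three rows `x ≥ y ≥ z` and `n` cells, the branching rule yields Frobenius'
formula `f^(x,y,z) = n! Δ(x + 2, y + 1, z) / ((x + 2)! (y + 1)! z!)`, with `Δ` the Vandermonde
product. It shows that moving a box from the first to the second row takes `(y + d + 2, y, 1)` to
`(y + d + 1, y + 1, 1)` and increases `f` exactly when `2 (y + 1) ≤ (d + 1) (d + 2)`. If this fails
at the last step towards `(a + b, a, 1)`, then `(a + b + 1, a - 1, 1)` lies above it. If it holds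
there, it holds at all earlier steps, so `f` increases along the chain of shapes `(·, y, 1)` with
`y ≤ a`; every shape `(x, y, 0)` dominating `(a + b, a, 1)` has smaller `f` than a member of that
chain: after moving boxes to the second row until `y ≥ 2`, move one from there to the third row.
-/

open scoped Nat

/-- The cells of the diagram whose row `i` has length `s i`. -/
def cells (s : ℕ → ℕ) : Set (ℕ × ℕ) := {c | c.2 < s c.1}

/-- `T` is a standard Young tableau on the diagram with row lengths `s`, with entries `0, …, n - 1`.
The fields mirror `IsSSYT`; rows are strictly increasing because `bijOn` rules out repetitions. -/
structure IsSYT (s : ℕ → ℕ) (n : ℕ) (T : ℕ → ℕ → ℕ) : Prop where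
  row_weak {i j₁ j₂ : ℕ} : j₁ ≤ j₂ → j₂ < s i → T i j₁ ≤ T i j₂
  col_strict {i₁ i₂ j : ℕ} : i₁ < i₂ → j < s i₂ → T i₁ j < T i₂ j
  zeros {i j : ℕ} : s i ≤ j → T i j = 0
  bijOn : Set.BijOn (Function.uncurry T) (cells s) (Set.Iio n)

/-- The number of standard Young tableaux with row lengths `s` and entries `0, …, n - 1`; it is `0`
unless the diagram has exactly `n` cells. -/
noncomputable def sytCount (s : ℕ → ℕ) (n : ℕ) : ℕ := {T | IsSYT s n T}.ncard

theorem IsSYT.entry_lt {s : ℕ → ℕ} {n : ℕ} {T : ℕ → ℕ → ℕ} (hT : IsSYT s n T) {i j : ℕ}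
    (hj : j < s i) : T i j < n :=
  hT.bijOn.mapsTo (show (i, j) ∈ cells s from hj)

theorem IsSYT.eq_of_entry_eq {s : ℕ → ℕ} {n : ℕ} {T : ℕ → ℕ → ℕ} (hT : IsSYT s n T) {i j p q : ℕ}
    (hj : j < s i) (hq : q < s p) (h : T i j = T p q) : i = p ∧ j = q :=
  Prod.mk.inj (hT.bijOn.injOn (show (i, j) ∈ cells s from hj) (show (p, q) ∈ cells s from hq) h)

theorem IsSYT.exists_entry_eq {s : ℕ → ℕ} {n : ℕ} {T : ℕ → ℕ → ℕ} (hT : IsSYT s n T) {k : ℕ}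
    (hk : k < n) : ∃ i, ∃ j < s i, T i j = k := by
  obtain ⟨⟨i, j⟩, hj, h⟩ := hT.bijOn.surjOn hk
  exact ⟨i, j, hj, h⟩

theorem finite_setOf_isSYT (s : ℕ → ℕ) (n : ℕ) : {T | IsSYT s n T}.Finite := by
  rcases Set.eq_empty_or_nonempty {T | IsSYT s n T} with h | ⟨T₀, hT₀⟩
  · exact h ▸ Set.finite_empty
  have : Finite (cells s) := (hT₀.bijOn.finite_iff_finite.2 (Set.finite_Iio n)).to_subtype
  have hfin : {e : cells s → ℕ | ∀ c, e c ∈ Set.Iio n}.Finite :=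
    Set.Finite.pi' fun _ => Set.finite_Iio n
  have hmaps : Set.MapsTo (fun T (c : cells s) => T c.1.1 c.1.2) {T | IsSYT s n T}
      {e | ∀ c, e c ∈ Set.Iio n} := fun T hT c => IsSYT.entry_lt hT c.2
  refine hfin.of_injOn hmaps fun T hT T' hT' h => ?_
  funext i j
  by_cases hj : j < s i
  · exact congrFun h ⟨(i, j), hj⟩
  · rw [hT.zeros (not_lt.1 hj), hT'.zeros (not_lt.1 hj)]

theorem sytCount_zero_zero : sytCount 0 0 = 1 := by
  have : {T | IsSYT 0 0 T} = {0} := by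
    ext T
    refine ⟨fun hT => funext₂ fun i j => hT.zeros (Nat.zero_le j), ?_⟩
    rintro rfl
    constructor <;> simp [cells]
  rw [sytCount, this, Set.ncard_singleton]

/-- The tableau `T` with the entry of the cell `(i, j)` increased by `v`; when that cell is still
empty, this writes `v` into it. -/
def addEntry (T : ℕ → ℕ → ℕ) (i j v : ℕ) : ℕ → ℕ → ℕ := T + Pi.single i (Pi.single j v)

theorem addEntry_same (T : ℕ → ℕ → ℕ) (i j v : ℕ) : addEntry T i j v i j = T i j + v := by
  simp [addEntry]

theorem addEntry_of_ne (T : ℕ → ℕ → ℕ) {i j p q : ℕ} (v : ℕ) (h : ¬(p = i ∧ q = j)) :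
    addEntry T i j v p q = T p q := by
  by_cases hp : p = i
  · simp [addEntry, hp, show q ≠ j from fun hq => h ⟨hp, hq⟩]
  · simp [addEntry, hp]

theorem addEntry_of_lt (T : ℕ → ℕ → ℕ) {s : ℕ → ℕ} {p q : ℕ} (i v : ℕ) (h : q < s p) :
    addEntry T i (s i) v p q = T p q :=
  addEntry_of_ne T v (by rintro ⟨rfl, rfl⟩; exact h.ne rfl)

theorem addEntry_injective (i j v : ℕ) : Function.Injective fun T => addEntry T i j v :=
  add_left_injective _

theorem lt_add_single_iff {s : ℕ → ℕ} {i p q : ℕ} :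
    q < (s + Pi.single i 1 : ℕ → ℕ) p ↔ p = i ∧ q = s i ∨ q < s p := by
  by_cases hp : p = i
  · subst hp
    simp only [Pi.add_apply, Pi.single_eq_same, true_and]
    lia
  · simp [hp]

theorem bijOn_addEntry_iff {s : ℕ → ℕ} {i n : ℕ} {T : ℕ → ℕ → ℕ} (hT : T i (s i) = 0) :
    Set.BijOn (Function.uncurry (addEntry T i (s i) n)) (cells (s + Pi.single i 1))
      (Set.Iio (n + 1)) ↔ Set.BijOn (Function.uncurry T) (cells s) (Set.Iio n) := by
  have hnew : Function.uncurry (addEntry T i (s i) n) (i, s i) = n := by simp [addEntry_same, hT]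
  have hcells : cells (s + Pi.single i 1) = insert (i, s i) (cells s) := by
    ext ⟨p, q⟩
    simpa [cells] using lt_add_single_iff
  have hIio : Set.Iio (n + 1) =
      insert (Function.uncurry (addEntry T i (s i) n) (i, s i)) (Set.Iio n) := by
    rw [hnew, ← Order.succ_eq_add_one, Order.Iio_succ_eq_insert]
  rw [hcells, hIio, Set.BijOn.insert_iff (by simp [cells]) (by simp [hnew])]
  exact Set.EqOn.bijOn_iff fun c hc => addEntry_of_lt T i n hc

theorem IsSYT.of_addEntry {s : ℕ → ℕ} {i n : ℕ} {T : ℕ → ℕ → ℕ} (hs : Antitone s)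
    (hT : T i (s i) = 0) (h : IsSYT (s + Pi.single i 1) (n + 1) (addEntry T i (s i) n)) :
    IsSYT s n T where
  row_weak {p q r} hqr hr := by
    simpa only [addEntry_of_lt T i n hr, addEntry_of_lt T i n (hqr.trans_lt hr)] using
      h.row_weak hqr (lt_add_single_iff.2 (.inr hr))
  col_strict {p q r} hpq hr := by
    simpa only [addEntry_of_lt T i n hr, addEntry_of_lt T i n (hr.trans_le (hs hpq.le))] using
      h.col_strict hpq (lt_add_single_iff.2 (.inr hr))
  zeros {p q} hq := by
    by_cases hc : p = i ∧ q = s i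
    · rw [hc.1, hc.2, hT]
    · rw [← addEntry_of_ne T n hc]
      exact h.zeros (not_lt.1 (lt_add_single_iff.not.2 (not_or.2 ⟨hc, hq.not_gt⟩)))
  bijOn := (bijOn_addEntry_iff hT).1 h.bijOn

theorem IsSYT.addEntry {s : ℕ → ℕ} {i n : ℕ} {T : ℕ → ℕ → ℕ} (h : IsSYT s n T) (hs : Antitone s)
    (hs' : Antitone (s + Pi.single i 1)) :
    IsSYT (s + Pi.single i 1) (n + 1) (addEntry T i (s i) n) where
  row_weak {p q r} hqr hr := by
    rcases lt_add_single_iff.1 hr with ⟨rfl, rfl⟩ | hr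
    · rw [addEntry_same, h.zeros le_rfl, zero_add]
      rcases hqr.eq_or_lt with rfl | hq
      · rw [addEntry_same, h.zeros le_rfl, zero_add]
      · rw [addEntry_of_lt T p n hq]
        exact (h.entry_lt hq).le
    · rw [addEntry_of_lt T i n hr, addEntry_of_lt T i n (hqr.trans_lt hr)]
      exact h.row_weak hqr hr
  col_strict {p q r} hpq hr := by
    have hp := lt_add_single_iff.1 (hr.trans_le (hs' hpq.le))
    rcases lt_add_single_iff.1 hr with ⟨rfl, rfl⟩ | hr
    · have hp := hp.resolve_left fun h => hpq.ne h.1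
      rw [addEntry_same, h.zeros le_rfl, zero_add, addEntry_of_lt T q n hp]
      exact h.entry_lt hp
    · rw [addEntry_of_lt T i n hr, addEntry_of_lt T i n (hr.trans_le (hs hpq.le))]
      exact h.col_strict hpq hr
  zeros {p q} hq := by
    obtain ⟨hc, hq⟩ := not_or.1 (lt_add_single_iff.not.1 hq.not_gt)
    rw [addEntry_of_ne T n hc, h.zeros (not_lt.1 hq)]
  bijOn := (bijOn_addEntry_iff (h.zeros le_rfl)).2 h.bijOn

/-- The standard Young tableaux with row lengths `s` whose largest entry `n` lies in row `i`. -/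
def sytLargestInRow (s : ℕ → ℕ) (n i : ℕ) : Set (ℕ → ℕ → ℕ) :=
  {T | IsSYT s (n + 1) T ∧ ∃ j < s i, T i j = n}

theorem sytLargestInRow_eq_empty {s : ℕ → ℕ} {i : ℕ} (h : s i ≤ s (i + 1)) (n : ℕ) :
    sytLargestInRow s n i = ∅ := by
  rw [Set.eq_empty_iff_forall_notMem]
  rintro T ⟨hT, j, hj, hTj⟩
  have hlt := hT.col_strict i.lt_succ_self (hj.trans_le h)
  have hle := hT.entry_lt (hj.trans_le h)
  lia

theorem sytLargestInRow_add_single {s : ℕ → ℕ} {i : ℕ} (hs : Antitone s)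
    (hs' : Antitone (s + Pi.single i 1)) (n : ℕ) :
    sytLargestInRow (s + Pi.single i 1) n i =
      (fun T => addEntry T i (s i) n) '' {T | IsSYT s n T} := by
  have hi : s i < (s + Pi.single i 1 : ℕ → ℕ) i := lt_add_single_iff.2 (.inl ⟨rfl, rfl⟩)
  ext T
  constructor
  · rintro ⟨hT, j, hj, hTj⟩
    have hlast : T i (s i) = n := by
      have hle := hT.row_weak (show j ≤ s i by simpa [Nat.lt_succ_iff] using hj) hi
      have hlt := hT.entry_lt hi
      lia
    have hrestore : addEntry (T - Pi.single i (Pi.single (s i) n)) i (s i) n = T := by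
      refine tsub_add_cancel_of_le fun p q => ?_
      by_cases hp : p = i <;> by_cases hq : q = s i <;> simp [hp, hq, hlast]
    refine ⟨_, IsSYT.of_addEntry hs ?_ (hrestore.symm ▸ hT), hrestore⟩
    simp [hlast]
  · rintro ⟨T, hT, rfl⟩
    exact ⟨hT.addEntry hs hs', s i, hi, by simp [addEntry_same, hT.zeros le_rfl]⟩

theorem ncard_sytLargestInRow {s : ℕ → ℕ} (hs : Antitone s) (n i : ℕ) :
    (sytLargestInRow s n i).ncard =
      if s (i + 1) < s i then sytCount (s - Pi.single i 1) n else 0 := by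
  split_ifs with hi
  · have hadd : s - Pi.single i 1 + Pi.single i 1 = s := by
      refine tsub_add_cancel_of_le fun p => ?_
      by_cases hp : p = i
      · subst hp
        simpa using Nat.one_le_of_lt hi
      · simp [hp]
    have hsub : Antitone (s - Pi.single i 1) := by
      refine antitone_nat_of_succ_le fun p => ?_
      by_cases hp : p = i
      · subst hp
        simpa using Nat.le_sub_one_of_lt hi
      · simpa [hp] using (Nat.sub_le _ _).trans (hs p.le_succ)
    have himage := sytLargestInRow_add_single hsub (hadd.symm ▸ hs) n
    rw [hadd] at himage
    rw [himage, Set.ncard_image_of_injective _ (addEntry_injective _ _ _), sytCount]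
  · rw [sytLargestInRow_eq_empty (not_lt.1 hi), Set.ncard_empty]

-- The branching rule: deleting the largest entry removes a corner of the shape.
theorem sytCount_succ {s : ℕ → ℕ} (hs : Antitone s) {k : ℕ} (hk : s k = 0) (n : ℕ) :
    sytCount s (n + 1) =
      ∑ i ∈ range k, if s (i + 1) < s i then sytCount (s - Pi.single i 1) n else 0 := by
  have hcover : {T | IsSYT s (n + 1) T} = ⋃ i ∈ (range k : Set ℕ), sytLargestInRow s n i := by
    ext T
    simp only [Set.mem_ofPred_eq, Set.mem_iUnion, Finset.mem_coe, Finset.mem_range, exists_prop]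
    refine ⟨fun hT => ?_, fun ⟨i, _, hT⟩ => hT.1⟩
    obtain ⟨i, j, hj, hTj⟩ := hT.exists_entry_eq n.lt_succ_self
    refine ⟨i, not_le.1 fun hki => ?_, hT, j, hj, hTj⟩
    have := hs hki
    lia
  have hdisj : (range k : Set ℕ).PairwiseDisjoint (sytLargestInRow s n) := by
    refine fun i _ p _ hip => Set.disjoint_left.2 ?_
    rintro T ⟨hT, j, hj, hTj⟩ ⟨-, q, hq, hTq⟩
    exact hip (hT.eq_of_entry_eq hj hq (hTj.trans hTq.symm)).1
  have hfin (i : ℕ) : (sytLargestInRow s n i).Finite :=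
    (finite_setOf_isSYT s (n + 1)).subset fun T hT => hT.1
  rw [sytCount, hcover, (range k).finite_toSet.ncard_biUnion (fun i _ => hfin i) hdisj,
    finsum_mem_coe_finset]
  simp only [ncard_sytLargestInRow hs]

/-- The row lengths of the Young diagram of the list `l`, padded with zeros. -/
def rowLen (l : List ℕ) (i : ℕ) : ℕ := l.getD i 0

theorem finite_cells_rowLen (l : List ℕ) : (cells (rowLen l)).Finite := by
  refine ((Set.finite_Iio l.length).prod (Set.finite_Iio l.sum)).subset ?_
  rintro ⟨i, j⟩ (hj : j < l.getD i 0)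
  have hi : i < l.length := by
    by_contra hi
    rw [List.getD_eq_default _ _ (not_lt.1 hi)] at hj
    exact absurd hj (Nat.not_lt_zero _)
  rw [List.getD_eq_getElem _ _ hi] at hj
  exact ⟨hi, hj.trans_le (List.le_sum_of_mem (List.getElem_mem hi))⟩

theorem getD_replicate_one (n k : ℕ) :
    (List.replicate n 1).getD k 0 = if k < n then 1 else 0 := by
  split_ifs with hk <;> simp [hk]

theorem bijOn_Iio_iff_ncard_fiber {α : Type*} {f : α → ℕ} {C : Set α} (hC : C.Finite) {n : ℕ} :
    Set.BijOn f C (Set.Iio n) ↔ ∀ k, {c ∈ C | f c = k}.ncard = if k < n then 1 else 0 := by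
  have hfin (k : ℕ) : {c ∈ C | f c = k}.Finite := hC.subset (Set.sep_subset _ _)
  constructor
  · intro h k
    split_ifs with hk
    · obtain ⟨c, hc, rfl⟩ := h.surjOn hk
      exact Set.ncard_eq_one.2
        ⟨c, Set.ext fun d => ⟨fun hd => h.injOn hd.1 hc hd.2, by rintro rfl; exact ⟨hc, rfl⟩⟩⟩
    · rw [Set.ncard_eq_zero (hfin k), Set.eq_empty_iff_forall_notMem]
      rintro c ⟨hc, rfl⟩
      exact hk (h.mapsTo hc)
  · intro h
    have hmaps : Set.MapsTo f C (Set.Iio n) := by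
      intro c hc
      by_contra hn
      have hempty := h (f c)
      rw [if_neg (show ¬f c < n from hn), Set.ncard_eq_zero (hfin _)] at hempty
      exact hempty.subset ⟨hc, rfl⟩
    have hfiber {k : ℕ} (hk : k < n) : ∃ e, {c ∈ C | f c = k} = {e} := by
      rw [← Set.ncard_eq_one, h k, if_pos hk]
    refine ⟨hmaps, fun c hc d hd hcd => ?_, fun k hk => ?_⟩
    · obtain ⟨e, he⟩ := hfiber (hmaps hd)
      exact (he.subset ⟨hc, hcd⟩).trans (he.subset ⟨hd, rfl⟩).symm
    · obtain ⟨e, he⟩ := hfiber hk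
      exact ⟨e, he.superset rfl⟩

theorem hasContent_replicate_one_iff {l : List ℕ} {n : ℕ} {T : ℕ → ℕ → ℕ} :
    HasContent l T (List.replicate n 1) ↔
      Set.BijOn (Function.uncurry T) (cells (rowLen l)) (Set.Iio n) := by
  rw [bijOn_Iio_iff_ncard_fiber (finite_cells_rowLen l)]
  simp only [← getD_replicate_one]
  rfl

theorem isSSYT_and_hasContent_iff_isSYT {l : List ℕ} {n : ℕ} {T : ℕ → ℕ → ℕ} :
    IsSSYT l T ∧ HasContent l T (List.replicate n 1) ↔ IsSYT (rowLen l) n T := by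
  rw [hasContent_replicate_one_iff]
  exact ⟨fun ⟨⟨hrow, hcol, hzero⟩, hbij⟩ => ⟨hrow _ _ _, hcol _ _ _, hzero _ _, hbij⟩,
    fun h => ⟨⟨fun _ _ _ => h.row_weak, fun _ _ _ => h.col_strict, fun _ _ => h.zeros⟩, h.bijOn⟩⟩

theorem fSYT_eq_sytCount (l : List ℕ) : fSYT l = sytCount (rowLen l) l.sum :=
  Nat.card_congr (Equiv.subtypeEquivRight fun _ => isSSYT_and_hasContent_iff_isSYT)

theorem fSYT_append_zero (l : List ℕ) : fSYT (l ++ [0]) = fSYT l := by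
  have hrow : rowLen (l ++ [0]) = rowLen l := by
    funext i
    rcases lt_trichotomy i l.length with hi | rfl | hi
    · simp [rowLen, List.getElem?_append_left hi]
    · simp [rowLen]
    · rw [rowLen, rowLen, List.getD_eq_default _ _ hi.le, List.getD_eq_default _ _ (by simpa)]
  rw [fSYT_eq_sytCount, fSYT_eq_sytCount, hrow]
  simp

theorem antitone_rowLen_triple {x y z : ℕ} (hyx : y ≤ x) (hzy : z ≤ y) :
    Antitone (rowLen [x, y, z]) := by
  refine antitone_nat_of_succ_le fun i => ?_
  rcases i with _ | _ | _ | i <;> simp [rowLen, hyx, hzy]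

theorem sytCount_triple_succ {x y z : ℕ} (hyx : y ≤ x) (hzy : z ≤ y) (n : ℕ) :
    sytCount (rowLen [x, y, z]) (n + 1) =
      (if y < x then sytCount (rowLen [x - 1, y, z]) n else 0) +
      (if z < y then sytCount (rowLen [x, y - 1, z]) n else 0) +
      (if 0 < z then sytCount (rowLen [x, y, z - 1]) n else 0) := by
  have h₀ : rowLen [x, y, z] - Pi.single 0 1 = rowLen [x - 1, y, z] := by
    funext i
    rcases i with _ | _ | _ | i <;> simp [rowLen]
  have h₁ : rowLen [x, y, z] - Pi.single 1 1 = rowLen [x, y - 1, z] := by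
    funext i
    rcases i with _ | _ | _ | i <;> simp [rowLen]
  have h₂ : rowLen [x, y, z] - Pi.single 2 1 = rowLen [x, y, z - 1] := by
    funext i
    rcases i with _ | _ | _ | i <;> simp [rowLen]
  rw [sytCount_succ (antitone_rowLen_triple hyx hzy) (k := 3) rfl, sum_range_succ, sum_range_succ,
    sum_range_one, h₀, h₁, h₂]
  rfl

/-- The Vandermonde product of three integers, with the sign that makes it positive when
`p > q > r`. -/
def vandermonde₃ (p q r : ℤ) : ℤ := (p - q) * (p - r) * (q - r)

theorem sum_mul_vandermonde₃_sub_one (p q r : ℤ) :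
    p * vandermonde₃ (p - 1) q r + q * vandermonde₃ p (q - 1) r + r * vandermonde₃ p q (r - 1) =
      (p + q + r - 3) * vandermonde₃ p q r := by
  unfold vandermonde₃
  ring

theorem sytCount_triple_zero : sytCount (rowLen [0, 0, 0]) 0 = 1 := by
  have hzero : rowLen [0, 0, 0] = 0 := by
    funext i
    rcases i with _ | _ | _ | i <;> rfl
  rw [hzero, sytCount_zero_zero]

-- Frobenius' form of the hook length formula, in the shifted row lengths `x + 2`, `y + 1`, `z`.
theorem sytCount_triple_mul_factorials (n : ℕ) {x y z : ℕ} (hyx : y ≤ x) (hzy : z ≤ y)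
    (hn : x + y + z = n) :
    (sytCount (rowLen [x, y, z]) n : ℤ) * ((x + 2)! * (y + 1)! * z !) =
      n ! * vandermonde₃ (x + 2) (y + 1) z := by
  induction n generalizing x y z with
  | zero =>
    obtain ⟨rfl, rfl, rfl⟩ : x = 0 ∧ y = 0 ∧ z = 0 := by lia
    simp [sytCount_triple_zero, vandermonde₃, Nat.factorial]
  | succ n ih =>
    have row₀ : ((if y < x then sytCount (rowLen [x - 1, y, z]) n else 0 : ℕ) : ℤ) *
        ((x + 2)! * (y + 1)! * z !) = n ! * ((x + 2) * vandermonde₃ (x + 2 - 1) (y + 1) z) := by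
      split_ifs with h
      · obtain ⟨x, rfl⟩ := Nat.exists_eq_add_one_of_ne_zero (by lia : x ≠ 0)
        have := ih (x := x) (y := y) (z := z) (by lia) hzy (by lia)
        push_cast [vandermonde₃, Nat.factorial_succ] at this ⊢
        linear_combination ((x : ℤ) + 3) * this
      · obtain rfl : x = y := by lia
        rw [add_sub_assoc, vandermonde₃]
        norm_num
    have row₁ : ((if z < y then sytCount (rowLen [x, y - 1, z]) n else 0 : ℕ) : ℤ) *
        ((x + 2)! * (y + 1)! * z !) = n ! * ((y + 1) * vandermonde₃ (x + 2) (y + 1 - 1) z) := by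
      split_ifs with h
      · obtain ⟨y, rfl⟩ := Nat.exists_eq_add_one_of_ne_zero (by lia : y ≠ 0)
        have := ih (x := x) (y := y) (z := z) (by lia) (by lia) (by lia)
        push_cast [vandermonde₃, Nat.factorial_succ] at this ⊢
        linear_combination ((y : ℤ) + 2) * this
      · obtain rfl : y = z := by lia
        simp [vandermonde₃]
    have row₂ : ((if 0 < z then sytCount (rowLen [x, y, z - 1]) n else 0 : ℕ) : ℤ) *
        ((x + 2)! * (y + 1)! * z !) = n ! * (z * vandermonde₃ (x + 2) (y + 1) (z - 1)) := by
      split_ifs with h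
      · obtain ⟨z, rfl⟩ := Nat.exists_eq_add_one_of_ne_zero h.ne'
        have := ih (x := x) (y := y) (z := z) hyx (by lia) (by lia)
        push_cast [vandermonde₃, Nat.factorial_succ] at this ⊢
        linear_combination ((z : ℤ) + 1) * this
      · obtain rfl : z = 0 := by lia
        simp
    have hxyz : (x + y + z : ℤ) = n + 1 := mod_cast hn
    rw [sytCount_triple_succ hyx hzy, Nat.factorial_succ n]
    push_cast at row₀ row₁ row₂ ⊢
    linear_combination row₀ + row₁ + row₂ +
      (n ! : ℤ) * sum_mul_vandermonde₃_sub_one (x + 2) (y + 1) z +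
      (n ! : ℤ) * vandermonde₃ (x + 2) (y + 1) z * hxyz

theorem sum_triple {x y z : ℕ} : [x, y, z].sum = x + y + z := by
  simp [add_assoc]

theorem fSYT_triple_mul_factorials {x y z : ℕ} (hyx : y ≤ x) (hzy : z ≤ y) :
    (fSYT [x, y, z] : ℤ) * ((x + 2)! * (y + 1)! * z !) =
      (x + y + z)! * vandermonde₃ (x + 2) (y + 1) z := by
  rw [fSYT_eq_sytCount, sum_triple, sytCount_triple_mul_factorials _ hyx hzy rfl]

theorem lt_iff_lt_of_mul_eq_mul {R : Type*} [Semiring R] [LinearOrder R] [IsStrictOrderedRing R]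
    {f g k n p q : R} (hk : 0 < k) (hn : 0 < n) (hf : f * k = n * p) (hg : g * k = n * q) :
    f < g ↔ p < q := by
  rw [← mul_lt_mul_iff_left₀ hk, hf, hg, mul_lt_mul_iff_right₀ hn]

theorem fSYT_succ_fst_lt_fSYT_succ_snd_iff {x y z : ℕ} (hyx : y + 1 ≤ x) (hzy : z ≤ y) :
    fSYT [x + 1, y, z] < fSYT [x, y + 1, z] ↔
      (y + 2) * vandermonde₃ (x + 3) (y + 1) z < (x + 3) * vandermonde₃ (x + 2) (y + 2) z := by
  have hf := fSYT_triple_mul_factorials (x := x + 1) (y := y) (z := z) (by lia) hzy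
  have hg := fSYT_triple_mul_factorials (x := x) (y := y + 1) (z := z) hyx (by lia)
  have hsum : x + (y + 1) + z = x + 1 + y + z := by lia
  rw [Nat.factorial_succ (x + 2)] at hf
  rw [hsum, Nat.factorial_succ (y + 1)] at hg
  push_cast at hf hg
  rw [← Nat.cast_lt (α := ℤ)]
  refine lt_iff_lt_of_mul_eq_mul (R := ℤ) (k := (x + 3) * (y + 2) * ((x + 2)! * (y + 1)! * z !))
    (n := (x + 1 + y + z)!) (by positivity) (by positivity) ?_ ?_
  · unfold vandermonde₃ at hf ⊢
    linear_combination ((y : ℤ) + 2) * hf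
  · unfold vandermonde₃ at hg ⊢
    linear_combination ((x : ℤ) + 3) * hg

theorem fSYT_succ_snd_lt_fSYT_succ_trd_iff {x y z : ℕ} (hyx : y + 1 ≤ x) (hzy : z + 1 ≤ y) :
    fSYT [x, y + 1, z] < fSYT [x, y, z + 1] ↔
      (z + 1) * vandermonde₃ (x + 2) (y + 2) z <
        (y + 2) * vandermonde₃ (x + 2) (y + 1) (z + 1) := by
  have hf := fSYT_triple_mul_factorials (x := x) (y := y + 1) (z := z) hyx (by lia)
  have hg := fSYT_triple_mul_factorials (x := x) (y := y) (z := z + 1) (by lia) hzy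
  have hsum : x + (y + 1) + z = x + y + (z + 1) := by lia
  rw [hsum, Nat.factorial_succ (y + 1)] at hf
  rw [Nat.factorial_succ z] at hg
  push_cast at hf hg
  rw [← Nat.cast_lt (α := ℤ)]
  refine lt_iff_lt_of_mul_eq_mul (R := ℤ) (k := (y + 2) * (z + 1) * ((x + 2)! * (y + 1)! * z !))
    (n := (x + y + (z + 1))!) (by positivity) (by positivity) ?_ ?_
  · unfold vandermonde₃ at hf ⊢
    linear_combination ((z : ℤ) + 1) * hf
  · unfold vandermonde₃ at hg ⊢
    linear_combination ((y : ℤ) + 2) * hg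

theorem fSYT_succ_fst_lt_fSYT_succ_snd_zero_iff {y d : ℕ} (hd : 1 ≤ d) :
    fSYT [y + d + 1, y, 0] < fSYT [y + d, y + 1, 0] ↔ 2 * (y + 1) < d * (d + 1) := by
  rw [fSYT_succ_fst_lt_fSYT_succ_snd_iff (by lia) (Nat.zero_le y), ← Nat.cast_lt (α := ℤ),
    ← sub_pos, ← sub_pos (b := ((2 * (y + 1) : ℕ) : ℤ))]
  have hfactor : ((y + d : ℕ) + 3) * vandermonde₃ ((y + d : ℕ) + 2) (y + 2) (0 : ℕ) -
      (y + 2) * vandermonde₃ ((y + d : ℕ) + 3) (y + 1) (0 : ℕ) =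
      (y + d + 3) * (y + 2) * ((d * (d + 1) : ℕ) - (2 * (y + 1) : ℕ)) := by
    push_cast [vandermonde₃]
    ring
  rw [hfactor, mul_pos_iff_of_pos_left (by positivity)]

theorem fSYT_succ_snd_zero_lt_fSYT_one {x y : ℕ} (hy : 1 ≤ y) (hyx : y + 1 ≤ x) :
    fSYT [x, y + 1, 0] < fSYT [x, y, 1] := by
  obtain ⟨e, rfl⟩ := Nat.exists_eq_add_of_le (Nat.le_of_succ_le hyx)
  rw [fSYT_succ_snd_lt_fSYT_succ_trd_iff hyx hy, ← sub_pos]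
  have hdiff : (y + 2) * vandermonde₃ ((y + e : ℕ) + 2) (y + 1) ((0 : ℕ) + 1) -
      ((0 : ℕ) + 1) * vandermonde₃ ((y + e : ℕ) + 2) (y + 2) (0 : ℕ) =
      (y + 2) * ((e + 1) * (y + e + 1) * (y - 1) + (y + 1)) := by
    push_cast [vandermonde₃]
    ring
  have hy' : 0 ≤ (y : ℤ) - 1 := sub_nonneg.2 (mod_cast hy)
  rw [hdiff]
  positivity

theorem fSYT_succ_fst_lt_fSYT_succ_snd_one_iff {y d : ℕ} (hy : 1 ≤ y) :
    fSYT [y + 1 + d + 1, y, 1] < fSYT [y + 1 + d, y + 1, 1] ↔ 2 * (y + 1) ≤ (d + 1) * (d + 2) := by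
  rw [fSYT_succ_fst_lt_fSYT_succ_snd_iff (by lia) hy, ← sub_pos]
  have hdiff : ((y + 1 + d : ℕ) + 3) * vandermonde₃ ((y + 1 + d : ℕ) + 2) (y + 2) (1 : ℕ) -
      (y + 2) * vandermonde₃ ((y + 1 + d : ℕ) + 3) (y + 1) (1 : ℕ) =
      (y + 1) * (y + d + 3) * ((d + 1) * (d + 2) - 2 * (y + 1)) +
        (2 * (y + 1) + (d + 2) * (d + 3)) := by
    push_cast [vandermonde₃]
    ring
  rw [hdiff, ← Nat.cast_le (α := ℤ)]
  push_cast
  constructor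
  · intro hpos
    obtain ⟨k, hk⟩ : Even (((d : ℤ) + 1) * (d + 1 + 1)) := Int.even_mul_succ_self _
    by_contra! hlt
    -- Both products are even, so the failing inequality leaves room for the lower-order terms.
    have hgap : ((d : ℤ) + 1) * (d + 2) - 2 * (y + 1) ≤ -2 := by lia
    have hlead : ((y : ℤ) + 1) * (y + d + 3) * ((d + 1) * (d + 2) - 2 * (y + 1)) ≤
        (y + 1) * (y + d + 3) * -2 := mul_le_mul_of_nonneg_left hgap (by positivity)
    have hlower : ((d : ℤ) + 2) * (d + 3) ≤ (d + 2) * (2 * (y + 1)) :=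
      mul_le_mul_of_nonneg_left (by nlinarith) (by positivity)
    nlinarith only [hpos, hlead, hlower, Int.natCast_nonneg y]
  · intro hle
    have := sub_nonneg.2 hle
    positivity

theorem fSYT_triple_one_strictMonoOn {a b : ℕ} (h : 2 * a ≤ (b + 1) * (b + 2)) :
    StrictMonoOn (fun y => fSYT [2 * a + b - y, y, 1]) (Set.Icc 1 a) := by
  refine strictMonoOn_of_lt_add_one Set.ordConnected_Icc fun y _ hy hy' => ?_
  obtain ⟨c, rfl⟩ := Nat.exists_eq_add_of_le hy'.2
  have hx : 2 * (y + 1 + c) + b - y = y + 1 + (b + 2 * c) + 1 := by lia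
  have hx' : 2 * (y + 1 + c) + b - (y + 1) = y + 1 + (b + 2 * c) := by lia
  simp only [hx, hx']
  rw [fSYT_succ_fst_lt_fSYT_succ_snd_one_iff hy.1]
  nlinarith

theorem fSYT_triple_zero_strictMonoOn {n : ℕ} (hn : 5 ≤ n) :
    StrictMonoOn (fun y => fSYT [n - y, y, 0]) (Set.Iic 2) := by
  refine strictMonoOn_of_lt_add_one Set.ordConnected_Iic fun y _ _ (hy : y + 1 ≤ 2) => ?_
  obtain ⟨d, rfl⟩ := Nat.exists_eq_add_of_le (show 2 * y + 1 ≤ n by lia)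
  have hx : 2 * y + 1 + d - y = y + d + 1 := by lia
  have hx' : 2 * y + 1 + d - (y + 1) = y + d := by lia
  simp only [hx, hx']
  have hd : 2 ≤ d := by lia
  rw [fSYT_succ_fst_lt_fSYT_succ_snd_zero_iff (Nat.one_le_of_lt hd)]
  nlinarith

theorem fSYT_triple_zero_lt_fSYT_triple_one {a b y : ℕ} (ha : 2 ≤ a) (h : 2 * a ≤ (b + 1) * (b + 2))
    (hy : y ≤ a + 1) : fSYT [2 * a + b + 1 - y, y, 0] < fSYT [2 * a + b - a, a, 1] := by
  have hb : 1 ≤ b := Nat.one_le_iff_ne_zero.2 (by rintro rfl; lia)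
  have hlt {z : ℕ} (hz : 2 ≤ z) (hza : z ≤ a + 1) :
      fSYT [2 * a + b + 1 - z, z, 0] < fSYT [2 * a + b - a, a, 1] := by
    obtain ⟨z, rfl⟩ := Nat.exists_eq_add_of_le' hz
    have hx : 2 * a + b + 1 - (z + 2) = 2 * a + b - (z + 1) := by lia
    have hle := (fSYT_triple_one_strictMonoOn h).monotoneOn (a := z + 1) (b := a)
      ⟨by lia, by lia⟩ ⟨by lia, le_rfl⟩ (by lia)
    rw [hx]
    exact (fSYT_succ_snd_zero_lt_fSYT_one (by lia) (by lia)).trans_le hle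
  rcases lt_or_ge y 2 with hy₂ | hy₂
  · exact (fSYT_triple_zero_strictMonoOn (by lia) hy₂.le Set.self_mem_Iic hy₂).trans
      (hlt le_rfl (by lia))
  · exact hlt hy₂ hy

theorem DomLE.length_le {l m : List ℕ} (h : DomLE l m) (hsum : l.sum = m.sum)
    (hm : ∀ x ∈ m, 0 < x) : m.length ≤ l.length := by
  have hdrop : (m.drop l.length).sum = 0 := by
    have hle := h l.length
    have hsplit := m.sum_take_add_sum_drop l.length
    rw [List.take_length] at hle
    lia
  refine List.drop_eq_nil_iff.1 (List.eq_nil_iff_forall_not_mem.2 fun x hx => ?_)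
  exact (hm x (List.mem_of_mem_drop hx)).ne' (List.sum_eq_zero_iff.1 hdrop x hx)

theorem fSYT_lt_of_domLE {a b : ℕ} (ha : 2 ≤ a) (h : 2 * a ≤ (b + 1) * (b + 2)) {m : List ℕ}
    (hm : IsPartitionOf (2 * a + b + 1) m) (hne : m ≠ [2 * a + b - a, a, 1])
    (hdom : DomLE [2 * a + b - a, a, 1] m) : fSYT m < fSYT [2 * a + b - a, a, 1] := by
  obtain ⟨-, hpos, hsum⟩ := hm
  have hlen := hdom.length_le (by rw [hsum, sum_triple]; lia) hpos
  match m with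
  | [] => simp at hsum
  | [p] =>
    obtain rfl : p = 2 * a + b + 1 := by simpa using hsum
    rw [← fSYT_append_zero [_], ← fSYT_append_zero ([_] ++ [0])]
    exact fSYT_triple_zero_lt_fSYT_triple_one (y := 0) ha h (Nat.zero_le _)
  | [p, q] =>
    have hp : 2 * a + b - a ≤ p := by simpa using hdom 1
    have hpq : p + q = 2 * a + b + 1 := by simpa using hsum
    obtain rfl : p = 2 * a + b + 1 - q := by lia
    rw [← fSYT_append_zero [_, _]]
    exact fSYT_triple_zero_lt_fSYT_triple_one ha h (by lia)
  | [p, q, r] =>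
    have hp : 2 * a + b - a ≤ p := by simpa using hdom 1
    have hpq : 2 * a + b - a + a ≤ p + q := by simpa using hdom 2
    have hpqr : p + q + r = 2 * a + b + 1 := by rw [← hsum, sum_triple]
    have hq : 0 < q := hpos q (by simp)
    have hr : 0 < r := hpos r (by simp)
    obtain rfl : r = 1 := by lia
    obtain rfl : p = 2 * a + b - q := by lia
    have hqa : q ≠ a := by
      rintro rfl
      exact hne rfl
    exact fSYT_triple_one_strictMonoOn h ⟨hq, by lia⟩ ⟨by lia, le_rfl⟩ (by lia)
  | _ :: _ :: _ :: _ :: _ => exact absurd hlen (by simp)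

theorem isPartitionOf_triple {x y z : ℕ} (hyx : y ≤ x) (hzy : z ≤ y) (hz : 0 < z) :
    IsPartitionOf (x + y + z) [x, y, z] := by
  have hy := hz.trans_le hzy
  exact ⟨by simp [hyx, hzy, hzy.trans hyx], by simp [hz, hy, hy.trans_le hyx], sum_triple⟩

theorem domLE_succ_fst_of_succ_snd (x y : ℕ) (l : List ℕ) :
    DomLE (x :: (y + 1) :: l) ((x + 1) :: y :: l) := by
  rintro (_ | _ | k)
  · simp
  · simp
  · simp only [List.take_succ_cons, List.sum_cons]
    lia

/-- `(a+b, a, 1)` is maximal in the standard immersion poset on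
partitions of `2a+b+1` if and only if `a ≤ (b+1)(b+2)/2`. -/
theorem std_maximal_three_row_one (a b : ℕ) (ha : 2 ≤ a) :
    StdMaximal (2 * a + b + 1) [a + b, a, 1] ↔ a ≤ (b + 1) * (b + 2) / 2 := by
  rw [Nat.le_div_iff_mul_le two_pos, mul_comm a 2]
  constructor
  · intro hmax
    obtain ⟨c, rfl⟩ := Nat.exists_eq_add_of_le' (Nat.one_le_of_lt ha)
    have hc : 1 ≤ c := Nat.le_of_succ_le_succ ha
    have hsum : 2 * (c + 1) + b + 1 = c + 1 + b + 1 + c + 1 := by lia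
    rw [← fSYT_succ_fst_lt_fSYT_succ_snd_one_iff hc]
    by_contra! hle
    refine hmax [c + 1 + b + 1, c, 1] ?_ (by simp) ⟨domLE_succ_fst_of_succ_snd _ _ _, hle⟩
    exact hsum ▸ isPartitionOf_triple (by lia) hc one_pos
  · intro h m hm hne hle
    have hx : 2 * a + b - a = a + b := by lia
    rw [← hx] at hne hle
    exact (fSYT_lt_of_domLE ha h hm hne hle.1).not_ge hle.2
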